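/- arXiv:1402.0799 — 2 statements merged into one kernel-verified Lean document; each statement's English description precedes it below -/
import Mathlib

section
/- Let G be a group, S a generating n-tuple of G with n ≤ 3, and H a subgroup of finite index in G with n ≤ [G:H]. Then there is a generating n-tuple S' of G, Nielsen equivalent to S, and a left-right transversal T for H in G such that every entry of S' belongs to T. -/
/-- A single Nielsen move on an `n`-tuple of elements of `G`. -/
def IsNielsenMove {G : Type*} [Group G] {n : ℕ} (S S' : Fin n → G) : Prop :=
  (∃ i j, i ≠ j ∧
    (S' = Function.update S i (S j * S i) ∨ S' = Function.update S i ((S j)⁻¹ * S i) ∨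
     S' = Function.update S i (S i * S j) ∨ S' = Function.update S i (S i * (S j)⁻¹))) ∨
  (∃ i, S' = Function.update S i (S i)⁻¹) ∨
  (∃ i j, i ≠ j ∧ S' = S ∘ Equiv.swap i j)

/-- Two `n`-tuples are Nielsen equivalent if they differ by a finite sequence of Nielsen
moves. -/
def NielsenEquiv {G : Type*} [Group G] {n : ℕ} (S S' : Fin n → G) : Prop :=
  Relation.ReflTransGen IsNielsenMove S S'

/-- A left transversal for `H` in `G`: a set containing exactly one element of each left
coset of `H`. -/
def IsLeftTransversal {G : Type*} [Group G] (H : Subgroup G) (T : Set G) : Prop :=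
  ∀ g : G, ∃! t, t ∈ T ∧ g⁻¹ * t ∈ H

/-- A right transversal for `H` in `G`: a set containing exactly one element of each right
coset of `H`. -/
def IsRightTransversal {G : Type*} [Group G] (H : Subgroup G) (T : Set G) : Prop :=
  ∀ g : G, ∃! t, t ∈ T ∧ t * g⁻¹ ∈ H

/-!
A left and a right coset of `H` meet exactly when they lie in the same double coset, so the
bipartite graph of left versus right cosets is a disjoint union of complete bipartite graphs. By
Hall's theorem it has a perfect matching, and by completeness any finite partial matching extends
to a perfect one. Hence a set extends to a left-right transversal as soon as its elements are
separated, that is, lie in different left and different right cosets.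

Nielsen moves make all entries outside `H` separated, since one of two nonseparated entries can be
moved into `H`. If two entries `a`, `b` still lie in `H`, then for `n ≤ 3` the tuple is `(a, b, c)`
with `c ∉ H`. One of `(a, c * b * c, c)`, `(c * a * c, b, c)` and `(a, c * b, a * c)` is separated
unless `a`, `b` and `c` permute the two cosets `H` and `c * H`, which forces `H` to have index `2`.
-/

section Nielsen

variable {G : Type*} [Group G] {n : ℕ} {S S' : Fin n → G} {i j : Fin n}

theorem IsNielsenMove.update_mul_left (hij : i ≠ j) :
    IsNielsenMove S (Function.update S i (S j * S i)) :=
  .inl ⟨i, j, hij, .inl rfl⟩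

theorem IsNielsenMove.update_inv_mul_left (hij : i ≠ j) :
    IsNielsenMove S (Function.update S i ((S j)⁻¹ * S i)) :=
  .inl ⟨i, j, hij, .inr <| .inl rfl⟩

theorem IsNielsenMove.update_mul_right (hij : i ≠ j) :
    IsNielsenMove S (Function.update S i (S i * S j)) :=
  .inl ⟨i, j, hij, .inr <| .inr <| .inl rfl⟩

theorem IsNielsenMove.update_mul_inv_right (hij : i ≠ j) :
    IsNielsenMove S (Function.update S i (S i * (S j)⁻¹)) :=
  .inl ⟨i, j, hij, .inr <| .inr <| .inr rfl⟩

theorem NielsenEquiv.update_mul_mul (hij : i ≠ j) :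
    NielsenEquiv S (Function.update S i (S j * S i * S j)) := by
  have hright := IsNielsenMove.update_mul_right (S := Function.update S i (S j * S i)) hij
  simp only [Function.update_self, Function.update_of_ne hij.symm, Function.update_idem] at hright
  exact .tail (.single (.update_mul_left hij)) hright

theorem IsNielsenMove.forall_mem_iff (h : IsNielsenMove S S') (K : Subgroup G) :
    (∀ k, S' k ∈ K) ↔ ∀ k, S k ∈ K := by
  have update_iff {i : Fin n} {g : G} (hg : (∀ k, k ≠ i → S k ∈ K) → (g ∈ K ↔ S i ∈ K)) :
      (∀ k, Function.update S i g k ∈ K) ↔ ∀ k, S k ∈ K := by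
    rw [Function.forall_update_iff S fun _ x => x ∈ K, and_congr_left hg]
    exact ⟨fun h k => (eq_or_ne k i).elim (· ▸ h.1) (h.2 k), fun h => ⟨h i, fun k _ => h k⟩⟩
  rcases h with ⟨i, j, hij, rfl | rfl | rfl | rfl⟩ | ⟨i, rfl⟩ | ⟨i, j, -, rfl⟩
  · exact update_iff fun h => K.mul_mem_cancel_left (h j hij.symm)
  · exact update_iff fun h => K.mul_mem_cancel_left (K.inv_mem (h j hij.symm))
  · exact update_iff fun h => K.mul_mem_cancel_right (h j hij.symm)
  · exact update_iff fun h => K.mul_mem_cancel_right (K.inv_mem (h j hij.symm))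
  · exact update_iff fun _ => K.inv_mem_iff
  · exact (Equiv.swap i j).forall_congr fun _ => .rfl

theorem NielsenEquiv.forall_mem_iff (h : NielsenEquiv S S') (K : Subgroup G) :
    (∀ k, S' k ∈ K) ↔ ∀ k, S k ∈ K := by
  induction h with
  | refl => rfl
  | tail _ hmove ih => exact (hmove.forall_mem_iff K).trans ih

theorem NielsenEquiv.closure_range_eq (h : NielsenEquiv S S') :
    Subgroup.closure (Set.range S') = Subgroup.closure (Set.range S) := by
  refine eq_of_forall_ge_iff fun K => ?_
  simpa only [Subgroup.closure_le, Set.range_subset_iff, SetLike.mem_coe] using h.forall_mem_iff K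

end Nielsen

section Matching

theorem exists_equiv_forall_exists_fst_eq {α β κ : Type*} [Finite α] [Finite κ] [Nonempty κ]
    (φ : α × κ ≃ β × κ) : ∃ f : α ≃ β, ∀ a, ∃ k, (φ (a, k)).1 = f a := by
  classical
  have : Finite (β × κ) := .of_equiv _ φ
  have : Finite β := .of_surjective (Prod.fst : β × κ → β) Prod.fst_surjective
  have := Fintype.ofFinite α
  have := Fintype.ofFinite β
  have := Fintype.ofFinite κ
  let neighbors (a : α) : Finset β := {b | ∃ k, (φ (a, k)).1 = b}
  have hall (A : Finset α) : A.card ≤ (A.biUnion neighbors).card := by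
    refine Nat.le_of_mul_le_mul_right ?_ (Fintype.card_pos (α := κ))
    rw [← Finset.card_univ, ← Finset.card_product, ← Finset.card_product]
    refine Finset.card_le_card_of_injOn φ (fun x hx => ?_) φ.injective.injOn
    have hxA : x.1 ∈ A := (Finset.mem_product.1 hx).1
    exact Finset.mem_product.2 ⟨Finset.mem_biUnion.2 ⟨x.1, hxA, by simp [neighbors]⟩,
      Finset.mem_univ _⟩
  obtain ⟨f, hf, hmem⟩ := (Finset.all_card_le_biUnion_card_iff_exists_injective neighbors).1 hall
  have hcard : Nat.card α = Nat.card β := by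
    have := Nat.card_congr φ
    rwa [Nat.card_prod, Nat.card_prod, Nat.mul_left_inj Nat.card_pos.ne'] at this
  exact ⟨.ofBijective f (hf.bijective_of_nat_card_le hcard.ge),
    fun a => by simpa [neighbors] using hmem a⟩

/-- A difunctional relation: its graph is a disjoint union of complete bipartite graphs. -/
def IsDifunctional {α β : Type*} (R : α → β → Prop) : Prop :=
  ∀ ⦃x x' y y'⦄, R x y → R x' y → R x y' → R x' y'

theorem IsDifunctional.exists_equiv_extending {α β ι : Type*} {R : α → β → Prop}
    (hR : IsDifunctional R) {f : α ≃ β} (hf : ∀ x, R x (f x)) {s : Set ι} (hs : s.Finite)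
    {u : ι → α} {v : ι → β} (hu : s.InjOn u) (hv : s.InjOn v) (huv : ∀ i ∈ s, R (u i) (v i)) :
    ∃ f' : α ≃ β, (∀ x, R x (f' x)) ∧ ∀ i ∈ s, f' (u i) = v i := by
  classical
  induction s, hs using Set.Finite.induction_on with
  | empty => exact ⟨f, hf, by simp⟩
  | @insert i s hi _ ih =>
    obtain ⟨f, hf, hfs⟩ := ih (hu.mono (s.subset_insert i)) (hv.mono (s.subset_insert i))
      fun j hj => huv j (.inr hj)
    have hi_rel : R (u i) (v i) := huv i (s.mem_insert i)
    refine ⟨f.trans (.swap (f (u i)) (v i)), fun x => ?_, ?_⟩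
    · rw [Equiv.trans_apply]
      rcases eq_or_ne (f x) (f (u i)) with hx | hx
      · rwa [hx, Equiv.swap_apply_left, f.injective hx]
      rcases eq_or_ne (f x) (v i) with hx' | hx'
      · rw [hx', Equiv.swap_apply_right]
        exact hR hi_rel (hx' ▸ hf x) (hf _)
      · rw [Equiv.swap_apply_of_ne_of_ne hx hx']
        exact hf x
    · rintro j (rfl | hj)
      · simp
      · have hji : j ≠ i := fun h => hi (h ▸ hj)
        rw [Equiv.trans_apply, Equiv.swap_apply_of_ne_of_ne, hfs j hj]
        · exact f.injective.ne (hu.ne (.inr hj) (s.mem_insert i) hji)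
        · rw [hfs j hj]
          exact hv.ne (.inr hj) (s.mem_insert i) hji

end Matching

section Transversal

variable {G : Type*} [Group G] {H : Subgroup G}

/-- The left coset `x` meets the right coset represented by `y`. Throughout, the right coset
`H * g` is represented by its inverse, the left coset `g⁻¹ * H`. -/
def CosetsMeet (H : Subgroup G) (x y : G ⧸ H) : Prop :=
  ∃ g : G, (g : G ⧸ H) = x ∧ ((g⁻¹ : G) : G ⧸ H) = y

theorem isDifunctional_cosetsMeet : IsDifunctional (CosetsMeet H) := by
  rintro _ _ _ _ ⟨g, rfl, rfl⟩ ⟨g₁, rfl, h₁⟩ ⟨g₂, h₂, rfl⟩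
  rw [QuotientGroup.eq] at h₁ h₂
  refine ⟨g₁ * g⁻¹ * g₂, ?_, ?_⟩ <;> rw [QuotientGroup.eq]
  · simpa [mul_assoc] using h₂
  · simpa [mul_assoc] using h₁

theorem exists_equiv_forall_cosetsMeet (H : Subgroup G) [H.FiniteIndex] :
    ∃ f : G ⧸ H ≃ G ⧸ H, ∀ x, CosetsMeet H x (f x) := by
  let e := Subgroup.quotientEquivProdOfLE H.normalCore_le
  have : Finite (H ⧸ H.normalCore.subgroupOf H) :=
    .of_surjective (Prod.snd ∘ e) (Prod.snd_surjective.comp e.surjective)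
  obtain ⟨f, hf⟩ := exists_equiv_forall_exists_fst_eq (e.symm.trans ((Equiv.inv _).trans e))
  refine ⟨f, fun x => ?_⟩
  obtain ⟨k, hk⟩ := hf x
  obtain ⟨g, hg⟩ := QuotientGroup.mk_surjective (e.symm (x, k))
  refine ⟨g, ?_, ?_⟩
  · change (e (g : G ⧸ H.normalCore)).1 = x
    rw [hg, e.apply_symm_apply]
  · rw [← hk, Equiv.trans_apply, ← hg]
    rfl

theorem isLeftTransversal_range {ι : Type*} {t : ι → G}
    (ht : Function.Bijective fun i => (t i : G ⧸ H)) : IsLeftTransversal H (Set.range t) := by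
  intro g
  obtain ⟨i, hi, hunique⟩ := ht.existsUnique (g : G ⧸ H)
  refine ⟨t i, ⟨⟨i, rfl⟩, QuotientGroup.eq.1 hi.symm⟩, ?_⟩
  rintro _ ⟨⟨j, rfl⟩, hj⟩
  rw [hunique j (QuotientGroup.eq.2 hj).symm]

theorem isRightTransversal_range {ι : Type*} {t : ι → G}
    (ht : Function.Bijective fun i => (((t i)⁻¹ : G) : G ⧸ H)) :
    IsRightTransversal H (Set.range t) := by
  intro g
  obtain ⟨i, hi, hunique⟩ := ht.existsUnique ((g⁻¹ : G) : G ⧸ H)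
  refine ⟨t i, ⟨⟨i, rfl⟩, by simpa using QuotientGroup.eq.1 hi⟩, ?_⟩
  rintro _ ⟨⟨j, rfl⟩, hj⟩
  rw [hunique j (QuotientGroup.eq.2 (by simpa using hj))]

/-- `a` and `b` lie in different left cosets and in different right cosets of `H`. -/
def CosetSeparated (H : Subgroup G) (a b : G) : Prop :=
  a⁻¹ * b ∉ H ∧ a * b⁻¹ ∉ H

theorem CosetSeparated.symm {a b : G} (h : CosetSeparated H a b) : CosetSeparated H b a :=
  ⟨fun hba => h.1 (by simpa using H.inv_mem hba), fun hba => h.2 (by simpa using H.inv_mem hba)⟩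

theorem CosetSeparated.of_mem_of_notMem {a b : G} (ha : a ∈ H) (hb : b ∉ H) :
    CosetSeparated H a b := by
  constructor
  · rwa [H.mul_mem_cancel_left (H.inv_mem ha)]
  · rwa [H.mul_mem_cancel_left ha, H.inv_mem_iff]

theorem injOn_mk_of_pairwise_cosetSeparated {A : Set G} (hA : A.Pairwise (CosetSeparated H)) :
    A.InjOn fun a : G => (a : G ⧸ H) :=
  fun _ ha _ hb hab => hA.eq ha hb fun hsep => hsep.1 (QuotientGroup.eq.1 hab)

theorem injOn_mk_inv_of_pairwise_cosetSeparated {A : Set G}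
    (hA : A.Pairwise (CosetSeparated H)) : A.InjOn fun a : G => ((a⁻¹ : G) : G ⧸ H) :=
  fun _ ha _ hb hab => hA.eq ha hb fun hsep => hsep.2 (by simpa using QuotientGroup.eq.1 hab)

theorem exists_leftRightTransversal_superset [H.FiniteIndex] {A : Set G}
    (hA : A.Pairwise (CosetSeparated H)) :
    ∃ T, A ⊆ T ∧ IsLeftTransversal H T ∧ IsRightTransversal H T := by
  have hinj := injOn_mk_of_pairwise_cosetSeparated hA
  obtain ⟨f₀, hf₀⟩ := exists_equiv_forall_cosetsMeet H
  obtain ⟨f, hf, hfA⟩ := isDifunctional_cosetsMeet.exists_equiv_extending hf₀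
    (.of_injOn (Set.mapsTo_univ _ _) hinj Set.finite_univ) hinj
    (injOn_mk_inv_of_pairwise_cosetSeparated hA) fun a _ => ⟨a, rfl, rfl⟩
  have hrep (x : G ⧸ H) : ∃ g : G, (g : G ⧸ H) = x ∧ ((g⁻¹ : G) : G ⧸ H) = f x ∧
      ∀ a ∈ A, (a : G ⧸ H) = x → g = a := by
    by_cases hx : ∃ a ∈ A, (a : G ⧸ H) = x
    · obtain ⟨a, ha, rfl⟩ := hx
      exact ⟨a, rfl, (hfA a ha).symm, fun b hb hba => hinj ha hb hba.symm⟩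
    · obtain ⟨g, hg, hg'⟩ := hf x
      exact ⟨g, hg, hg', fun a ha hax => (hx ⟨a, ha, hax⟩).elim⟩
  choose t ht_left ht_right ht_mem using hrep
  refine ⟨Set.range t, fun a ha => ⟨a, ht_mem a a ha rfl⟩, isLeftTransversal_range ?_,
    isRightTransversal_range ?_⟩
  · simpa only [ht_left] using! Function.bijective_id
  · simpa only [ht_right] using f.bijective

end Transversal

section Separation

variable {G : Type*} [Group G] {H : Subgroup G}

theorem CosetSeparated.mul_mul_self {b c : G} (hb : b ∈ H) (hc : c ∉ H) :
    CosetSeparated H (c * b * c) c := by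
  constructor
  · have : (c * b * c)⁻¹ * c = c⁻¹ * b⁻¹ := by group
    rwa [this, H.mul_mem_cancel_right (H.inv_mem hb), H.inv_mem_iff]
  · rwa [mul_inv_cancel_right, H.mul_mem_cancel_right hb]

theorem CosetSeparated.mul_mul {a b c : G} (ha : a ∈ H) (hb : b ∈ H) (hcac : c * a * c ∈ H)
    (hcbc : c * b * c ∈ H) (hcc : c * c ∉ H) : CosetSeparated H (c * b) (a * c) := by
  constructor <;> intro h
  · have : c * c = c * a * c * (b * ((c * b)⁻¹ * (a * c)))⁻¹ := by group
    exact hcc (this ▸ H.mul_mem hcac (H.inv_mem (H.mul_mem hb h)))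
  · have : c * c = (c * b * (a * c)⁻¹ * a)⁻¹ * (c * b * c) := by group
    exact hcc (this ▸ H.mul_mem (H.inv_mem (H.mul_mem h ha)) hcbc)

open scoped Pointwise in
theorem eq_univ_of_forall_smul_mem {α : Type*} [MulAction G α] [MulAction.IsPretransitive G α]
    {X : Set G} (hX : Subgroup.closure X = ⊤) {s : Set α} (hfin : s.Finite) (hne : s.Nonempty)
    (h : ∀ g ∈ X, ∀ x ∈ s, g • x ∈ s) : s = Set.univ := by
  have hstab : Subgroup.closure X ≤ MulAction.stabilizer G s :=
    (Subgroup.closure_le _).2 fun g hg => (MulAction.mem_stabilizer_set' hfin).2 (h g hg)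
  obtain ⟨x, hx⟩ := hne
  refine Set.eq_univ_of_forall fun y => ?_
  obtain ⟨g, rfl⟩ := MulAction.exists_smul_eq G x y
  exact (MulAction.mem_stabilizer_set.1 (hstab (hX ▸ Subgroup.mem_top g)) x).2 hx

theorem index_eq_two_of_closure_eq_top {X : Set G} (hX : Subgroup.closure X = ⊤) {c : G}
    (hc : c ∉ H) (hcc : c * c ∈ H) (h : ∀ x ∈ X, x = c ∨ x ∈ H ∧ c * x * c ∈ H) :
    H.index = 2 := by
  have hne : ((1 : G) : G ⧸ H) ≠ c := fun h => hc (by simpa using QuotientGroup.eq.1 h)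
  have hpair : ({((1 : G) : G ⧸ H), (c : G ⧸ H)} : Set (G ⧸ H)) = Set.univ := by
    refine eq_univ_of_forall_smul_mem hX (Set.toFinite _) (Set.insert_nonempty _ _) ?_
    rintro x hx _ (rfl | rfl) <;> rcases h x hx with rfl | ⟨hxH, hcxc⟩
    · exact .inr (congrArg _ (mul_one x))
    · exact .inl (QuotientGroup.eq.2 (by simpa using hxH))
    · exact .inl (Eq.symm <| QuotientGroup.eq.2 (by simpa using hcc))
    · refine .inr (Eq.symm <| QuotientGroup.eq.2 ?_)
      have : c⁻¹ * (x * c) = (c * c)⁻¹ * (c * x * c) := by group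
      exact this ▸ H.mul_mem (H.inv_mem hcc) hcxc
  rw [Subgroup.index, ← Set.ncard_univ, ← hpair, Set.ncard_pair hne]

variable {n : ℕ} {S : Fin n → G} {i j k : Fin n}

theorem exists_nielsenEquiv_update_mem (hij : i ≠ j) (h : ¬CosetSeparated H (S i) (S j)) :
    ∃ g ∈ H, NielsenEquiv S (Function.update S i g) := by
  rcases not_and_or.1 h with hleft | hright
  · exact ⟨(S j)⁻¹ * S i, by simpa using H.inv_mem (not_not.1 hleft),
      .single (.update_inv_mul_left hij)⟩
  · exact ⟨S i * (S j)⁻¹, not_not.1 hright, .single (.update_mul_inv_right hij)⟩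

theorem exists_nielsenEquiv_pairwise_cosetSeparated_or_mem (H : Subgroup G) (S : Fin n → G) :
    ∃ S', NielsenEquiv S S' ∧
      Pairwise fun i j => CosetSeparated H (S' i) (S' j) ∨ S' i ∈ H ∧ S' j ∈ H := by
  induction hm : {l | S l ∉ H}.ncard using Nat.strong_induction_on generalizing S with
  | _ m ih =>
    by_cases hS : Pairwise fun i j => CosetSeparated H (S i) (S j) ∨ S i ∈ H ∧ S j ∈ H
    · exact ⟨S, .refl, hS⟩
    obtain ⟨i, j, hij, hsep, hmem⟩ :
        ∃ i j, i ≠ j ∧ ¬CosetSeparated H (S i) (S j) ∧ ¬(S i ∈ H ∧ S j ∈ H) := by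
      simpa only [Pairwise, not_forall, not_or, exists_prop] using hS
    have hi : S i ∉ H := fun hi =>
      hsep (.of_mem_of_notMem hi fun hj => hmem ⟨hi, hj⟩)
    obtain ⟨g, hg, hSg⟩ := exists_nielsenEquiv_update_mem hij hsep
    have hlt : {l | Function.update S i g l ∉ H}.ncard < m := by
      refine hm ▸ Set.ncard_lt_ncard ⟨fun l hl => ?_, fun h => h hi (by simpa using hg)⟩
      have hli : l ≠ i := by
        rintro rfl
        exact hl (by simpa using hg)
      simpa [hli] using hl
    obtain ⟨S', hS', hpair⟩ := ih _ hlt _ rfl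
    exact ⟨S', Relation.ReflTransGen.trans hSg hS', hpair⟩

theorem pairwise_cosetSeparated_of_forall_eq (hcover : ∀ l, l = i ∨ l = j ∨ l = k)
    (hij : CosetSeparated H (S i) (S j)) (hik : CosetSeparated H (S i) (S k))
    (hjk : CosetSeparated H (S j) (S k)) : Pairwise fun l m => CosetSeparated H (S l) (S m) := by
  intro l m hlm
  rcases hcover l with rfl | rfl | rfl <;> rcases hcover m with rfl | rfl | rfl <;>
    first | exact absurd rfl hlm | assumption | exact CosetSeparated.symm ‹_›

theorem exists_nielsenEquiv_of_mul_mul_notMem (hcover : ∀ l, l = i ∨ l = j ∨ l = k) (hij : i ≠ j)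
    (hi : S i ∈ H) (hj : S j ∈ H) (hk : S k ∉ H) (h : S k * S j * S k ∉ H) :
    ∃ S', NielsenEquiv S S' ∧ Pairwise fun l m => CosetSeparated H (S' l) (S' m) := by
  have hjk : j ≠ k := fun h => hk (h ▸ hj)
  refine ⟨_, .update_mul_mul hjk, pairwise_cosetSeparated_of_forall_eq hcover ?_ ?_ ?_⟩ <;>
    simp only [Function.update_self, Function.update_of_ne hij, Function.update_of_ne hjk.symm]
  · exact .of_mem_of_notMem hi h
  · exact .of_mem_of_notMem hi hk
  · exact .mul_mul_self hj hk

theorem exists_nielsenEquiv_of_mul_self_notMem (hcover : ∀ l, l = i ∨ l = j ∨ l = k)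
    (hij : i ≠ j) (hi : S i ∈ H) (hj : S j ∈ H) (hiH : S k * S i * S k ∈ H)
    (hjH : S k * S j * S k ∈ H) (h : S k * S k ∉ H) :
    ∃ S', NielsenEquiv S S' ∧ Pairwise fun l m => CosetSeparated H (S' l) (S' m) := by
  have hk : S k ∉ H := fun hk => h (H.mul_mem hk hk)
  have hik : i ≠ k := fun h => hk (h ▸ hi)
  have hjk : j ≠ k := fun h => hk (h ▸ hj)
  let S₁ := Function.update S j (S k * S j)
  have hmove : IsNielsenMove S₁ (Function.update S₁ k (S₁ i * S₁ k)) := .update_mul_left hik.symm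
  refine ⟨_, .tail (.single (.update_mul_left hjk)) hmove,
    pairwise_cosetSeparated_of_forall_eq hcover ?_ ?_ ?_⟩ <;>
    simp only [S₁, Function.update_self, Function.update_of_ne hij, Function.update_of_ne hjk,
      Function.update_of_ne hik, Function.update_of_ne hjk.symm]
  · exact .of_mem_of_notMem hi (by rwa [H.mul_mem_cancel_right hj])
  · exact .of_mem_of_notMem hi (by rwa [H.mul_mem_cancel_left hi])
  · exact .mul_mul hi hj hiH hjH h

theorem exists_nielsenEquiv_of_mem_of_mem (hcover : ∀ l, l = i ∨ l = j ∨ l = k) (hij : i ≠ j)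
    (hi : S i ∈ H) (hj : S j ∈ H) (hk : S k ∉ H) (hS : Subgroup.closure (Set.range S) = ⊤)
    (hindex : H.index ≠ 2) :
    ∃ S', NielsenEquiv S S' ∧ Pairwise fun l m => CosetSeparated H (S' l) (S' m) := by
  by_cases hiH : S k * S i * S k ∈ H
  · by_cases hjH : S k * S j * S k ∈ H
    · by_cases hkk : S k * S k ∈ H
      · refine absurd (index_eq_two_of_closure_eq_top hS hk hkk ?_) hindex
        rintro _ ⟨l, rfl⟩
        rcases hcover l with rfl | rfl | rfl
        exacts [.inr ⟨hi, hiH⟩, .inr ⟨hj, hjH⟩, .inl rfl]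
      · exact exists_nielsenEquiv_of_mul_self_notMem hcover hij hi hj hiH hjH hkk
    · exact exists_nielsenEquiv_of_mul_mul_notMem hcover hij hi hj hk hjH
  · exact exists_nielsenEquiv_of_mul_mul_notMem (fun l => or_left_comm.1 (hcover l)) hij.symm
      hj hi hk hiH

theorem exists_nielsenEquiv_pairwise_cosetSeparated (hn : n ≤ 3)
    (hS : Subgroup.closure (Set.range S) = ⊤) (hindex : H.index = 0 ∨ n ≤ H.index) :
    ∃ S', NielsenEquiv S S' ∧ Pairwise fun i j => CosetSeparated H (S' i) (S' j) := by
  obtain ⟨S₁, hSS₁, hpair⟩ := exists_nielsenEquiv_pairwise_cosetSeparated_or_mem H S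
  by_cases hmem : ∃ i j, i ≠ j ∧ S₁ i ∈ H ∧ S₁ j ∈ H
  · obtain ⟨i, j, hij, hi, hj⟩ := hmem
    have hS₁ : Subgroup.closure (Set.range S₁) = ⊤ := hSS₁.closure_range_eq.trans hS
    obtain ⟨k, hk⟩ : ∃ k, S₁ k ∉ H := by
      by_contra! hall
      have htop : H = ⊤ :=
        top_le_iff.1 (hS₁ ▸ (Subgroup.closure_le H).2 (Set.range_subset_iff.2 hall))
      have : H.index = 1 := Subgroup.index_eq_one.2 htop
      omega
    have hik : i ≠ k := fun h => hk (h ▸ hi)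
    have hjk : j ≠ k := fun h => hk (h ▸ hj)
    obtain ⟨S', hS₁S', hsep⟩ := exists_nielsenEquiv_of_mem_of_mem (H := H)
      (fun l => by omega) hij hi hj hk hS₁ (by omega)
    exact ⟨S', Relation.ReflTransGen.trans hSS₁ hS₁S', hsep⟩
  · exact ⟨S₁, hSS₁, fun i j hij =>
      (hpair hij).resolve_right fun hmem' => hmem ⟨i, j, hij, hmem'⟩⟩

end Separation

/-- If `S` is a generating `n`-tuple of `G` with `n ≤ 3` and `H` is a subgroup of finite
index with `n ≤ [G:H]`, then there is a Nielsen-equivalent generating `n`-tuple `S'` and a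
left-right transversal `T` for `H` in `G` containing every entry of `S'`. -/
theorem stmt_9 {G : Type*} [Group G] (H : Subgroup G) (hfin : H.index ≠ 0) {n : ℕ}
    (hn : n ≤ 3) (S : Fin n → G) (hS : Subgroup.closure (Set.range S) = ⊤)
    (hindex : n ≤ H.index) :
    ∃ (S' : Fin n → G) (T : Set G), NielsenEquiv S S' ∧
      Subgroup.closure (Set.range S') = ⊤ ∧ IsLeftTransversal H T ∧
      IsRightTransversal H T ∧ ∀ i, S' i ∈ T := by
  have : H.FiniteIndex := ⟨hfin⟩
  obtain ⟨S', hSS', hsep⟩ := exists_nielsenEquiv_pairwise_cosetSeparated hn hS (.inr hindex)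
  obtain ⟨T, hT, hleft, hright⟩ := exists_leftRightTransversal_superset hsep.range_pairwise
  exact ⟨S', T, hSS', hSS'.closure_range_eq.trans hS, hleft, hright, Set.range_subset_iff.1 hT⟩
end

section
/- Let G be a group with d(G) = n and let H be a subgroup of finite index in G with [G:H] < n + 2^n. Then H contains no primitive element of G if and only if H is normal in G and the quotient G/H is isomorphic to C_2^n; moreover, in that case every left coset of H other than H itself contains a primitive element of G. -/
/-- A primitive element of a group `G` of finite rank: an element belonging to some
generating set of `G` of size exactly `d(G)`. -/
def IsPrimitive (G : Type*) [Group G] [Group.FG G] (g : G) : Prop :=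
  ∃ S : Finset G, g ∈ S ∧ S.card = Group.rank G ∧ Subgroup.closure (S : Set G) = ⊤

/-!
Fix generators `x₁, …, xₙ` of `G` and let `Kᵢ` be the subgroup generated by the `xⱼ` with `j ≠ i`.
For `w ∈ Kᵢ` all conjugates of `w * xᵢ` are primitive, so if `H` contains no primitive element,
then no such product fixes a coset: every `xᵢ` moves every coset out of its `Kᵢ`-orbit. Adding
generators one at a time therefore doubles the orbits at each step, so `Kᵢ`-orbits on `G ⧸ H` have
at least `2 ^ (n - 1)` points. When `[G : H] < 3 * 2 ^ (n - 1)` there is room for only two of them,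
and `xᵢ` exchanges them. The stabilizer of the `Kᵢ`-orbit of the coset `H` then has index two. The
intersection of these stabilizers has index `2 ^ n` and contains `H`, hence equals `H` because
`[G : H] < 2 * 2 ^ n`. A coset other than `H` lies outside the `Kᵢ`-orbit of `H` for some `i`, so it
has the form `w * xᵢ * H` with `w ∈ Kᵢ`.

Conversely, if `H` is the kernel of a surjection onto `C₂ⁿ`, a generating set of size `n` that meets
`H` would yield `n - 1` generators of `C₂ⁿ`.
-/

open MulAction Subgroup

lemma card_multiplicative_pi_zmod (ι : Type*) [Fintype ι] (k : ℕ) :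
    Nat.card (Multiplicative (ι → ZMod k)) = k ^ Fintype.card ι := by
  rw [Nat.card_congr Multiplicative.toAdd, Nat.card_fun, Nat.card_zmod, Nat.card_eq_fintype_card]

lemma insert_image_compl_singleton {ι β : Type*} (x : ι → β) (i : ι) :
    insert (x i) (x '' {i}ᶜ) = Set.range x := by
  rw [← Set.image_insert_eq, Set.insert_eq, Set.union_compl_self, Set.image_univ]

section Subgroups

variable {G ι : Type*} [Group G]

lemma closure_insert_mul_left {s : Set G} {w : G} (hw : w ∈ closure s) (t : G) :
    closure (insert (w * t) s) = closure (insert t s) := by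
  have subset_closure_insert (u : G) : closure s ≤ closure (insert u s) :=
    closure_mono (Set.subset_insert u s)
  have mem_closure_insert (u : G) : u ∈ closure (insert u s) :=
    subset_closure (Set.mem_insert u s)
  apply le_antisymm <;> rw [closure_le, Set.insert_subset_iff]
  · exact ⟨mul_mem (subset_closure_insert t hw) (mem_closure_insert t),
      subset_closure.trans (subset_closure_insert t)⟩
  · refine ⟨?_, subset_closure.trans (subset_closure_insert _)⟩
    exact (mul_mem_cancel_left (subset_closure_insert _ hw)).1 (mem_closure_insert (w * t))

lemma closure_insert_closure_eq_top {x : ι → G} (hx : closure (Set.range x) = ⊤) (i : ι) :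
    closure (insert (x i) (closure (x '' {i}ᶜ) : Set G)) = ⊤ := by
  rw [← top_le_iff, ← hx, ← insert_image_compl_singleton x i]
  exact closure_mono (Set.insert_subset_insert subset_closure)

lemma eq_of_le_of_index_lt_two_mul_index {H K : Subgroup G} (hHK : H ≤ K) (hH : H.index ≠ 0)
    (hlt : H.index < 2 * K.index) : H = K := by
  have hmul := relIndex_mul_index hHK
  have hpos : H.relIndex K ≠ 0 := fun h => hH (by rw [← hmul, h, zero_mul])
  have hlt_two : H.relIndex K < 2 := Nat.lt_of_mul_lt_mul_right (hmul ▸ hlt)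
  exact hHK.antisymm (relIndex_eq_one.1 (by omega))

lemma exists_hom_zmod_two_ker_eq_of_index_eq_two {M : Subgroup G} (hM : M.index = 2) :
    ∃ χ : G →* Multiplicative (ZMod 2), χ.ker = M := by
  have := normal_of_index_eq_two hM
  let e : G ⧸ M ≃* Multiplicative (ZMod 2) := mulEquivOfPrimeCardEq hM (Nat.card_zmod 2)
  exact ⟨(e : G ⧸ M →* _).comp (QuotientGroup.mk' M), by
    rw [MonoidHom.ker_mulEquiv_comp, QuotientGroup.ker_mk']⟩

lemma exists_surjective_hom_ker_eq_iInf_of_index_eq_two [Finite ι] {M : ι → Subgroup G}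
    (hM : ∀ i, (M i).index = 2) {x : ι → G} (hx : ∀ i j, x j ∈ M i ↔ i ≠ j) :
    ∃ φ : G →* Multiplicative (ι → ZMod 2), Function.Surjective φ ∧ φ.ker = ⨅ i, M i := by
  classical
  choose χ hχ using fun i => exists_hom_zmod_two_ker_eq_of_index_eq_two (hM i)
  let ψ : G →* ι → Multiplicative (ZMod 2) := MonoidHom.pi χ
  have hψ_ker : ψ.ker = ⨅ i, M i := by
    ext g
    simp only [mem_iInf, ← hχ, MonoidHom.mem_ker, ψ, funext_iff, MonoidHom.pi_apply, Pi.one_apply]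
  have eq_one_or_eq (a b : Multiplicative (ZMod 2)) (hb : b ≠ 1) : a = 1 ∨ a = b := by
    revert a b; decide
  have hψ_surj : ψ.range = ⊤ := by
    refine (eq_top_iff' _).2 fun v => pi_mem_of_mulSingle_mem v fun i => ?_
    have hχ_ne : χ i (x i) ≠ 1 := by
      rw [Ne, ← MonoidHom.mem_ker, hχ, hx]
      simp
    rcases eq_one_or_eq (v i) _ hχ_ne with hv | hv
    · rw [hv, Pi.mulSingle_one]
      exact one_mem _
    · refine ⟨x i, funext fun j => ?_⟩
      by_cases hji : j = i
      · subst hji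
        simp [ψ, hv]
      · simpa [ψ, hji, ← MonoidHom.mem_ker, hχ] using (hx j i).2 hji
  let e := (MulEquiv.funMultiplicative ι (ZMod 2)).symm
  exact ⟨(e : _ →* Multiplicative (ι → ZMod 2)).comp ψ,
    e.surjective.comp (MonoidHom.range_eq_top.1 hψ_surj), by
    rw [MonoidHom.ker_mulEquiv_comp, hψ_ker]⟩

end Subgroups

section Rank

variable {G : Type*} [Group G] [Group.FG G]

lemma exists_fin_closure_range_eq_top {n : ℕ} (hn : Group.rank G = n) :
    ∃ x : Fin n → G, closure (Set.range x) = ⊤ := by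
  obtain ⟨S, hcard, hS⟩ := Group.rank_spec G
  let e := S.equivFinOfCardEq (hcard.trans hn)
  refine ⟨Subtype.val ∘ e.symm, ?_⟩
  rw [EquivLike.range_comp, Subtype.range_coe]
  exact hS

lemma card_le_rank_multiplicative_pi_zmod (ι : Type*) [Fintype ι] {k : ℕ} (hk : 1 < k)
    [Group.FG (Multiplicative (ι → ZMod k))] :
    Fintype.card ι ≤ Group.rank (Multiplicative (ι → ZMod k)) := by
  have hexp (v : Multiplicative (ι → ZMod k)) : v ^ k = 1 :=
    Multiplicative.toAdd.injective (funext fun i => by simp)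
  have hdvd := card_dvd_exponent_pow_rank' _ hexp
  rwa [card_multiplicative_pi_zmod, Nat.pow_dvd_pow_iff_le_right hk] at hdvd

lemma isPrimitive_of_closure_insert_eq_top {g : G} {S : Finset G} (hS : S.card < Group.rank G)
    (hgen : closure (insert g (S : Set G)) = ⊤) : IsPrimitive G g := by
  classical
  rw [← Finset.coe_insert] at hgen
  exact ⟨insert g S, Finset.mem_insert_self g S,
    le_antisymm ((Finset.card_insert_le g S).trans hS) (Group.rank_le hgen), hgen⟩

lemma isPrimitive_mul_apply {ι : Type*} [Fintype ι] (hι : Fintype.card ι ≤ Group.rank G)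
    {x : ι → G} (hx : closure (Set.range x) = ⊤) {i : ι} {w : G} (hw : w ∈ closure (x '' {i}ᶜ)) :
    IsPrimitive G (w * x i) := by
  classical
  have hcard : ((Finset.univ.erase i).image x).card < Group.rank G :=
    (Finset.card_image_le.trans_lt (Finset.card_erase_lt_of_mem (Finset.mem_univ i))).trans_le hι
  have hcoe : (((Finset.univ.erase i).image x : Finset G) : Set G) = x '' {i}ᶜ := by
    simp [Set.compl_eq_univ_sdiff]
  refine isPrimitive_of_closure_insert_eq_top hcard ?_
  rw [hcoe, closure_insert_mul_left hw, insert_image_compl_singleton, hx]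

lemma IsPrimitive.map_mulEquiv {G' : Type*} [Group G'] [Group.FG G'] {g : G}
    (hg : IsPrimitive G g) (e : G ≃* G') : IsPrimitive G' (e g) := by
  obtain ⟨S, hgS, hcard, hS⟩ := hg
  refine ⟨S.map e.toEquiv.toEmbedding, Finset.mem_map_of_mem _ hgS, ?_, ?_⟩
  · rw [Finset.card_map, hcard, Group.rank_congr e]
  · rw [Finset.coe_map]
    exact (e.toMonoidHom.map_closure S).symm.trans
      (hS ▸ map_top_of_surjective e.toMonoidHom e.surjective)

lemma not_isPrimitive_of_mem_ker {Q : Type*} [Group Q] [Group.FG Q]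
    (hrank : Group.rank G ≤ Group.rank Q) {φ : G →* Q} (hφ : Function.Surjective φ) {g : G}
    (hg : g ∈ φ.ker) : ¬ IsPrimitive G g := by
  classical
  rintro ⟨S, hgS, hcard, hS⟩
  have hgen : closure (((S.erase g).image φ : Finset Q) : Set Q) = ⊤ := by
    rw [← closure_insert_one, ← MonoidHom.mem_ker.1 hg, ← Finset.coe_insert, ← Finset.image_insert,
      Finset.insert_erase hgS, Finset.coe_image, ← MonoidHom.map_closure, hS,
      map_top_of_surjective φ hφ]
  have hlt : Group.rank Q < S.card := (Group.rank_le hgen).trans_lt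
    (Finset.card_image_le.trans_lt (Finset.card_erase_lt_of_mem hgS))
  omega

end Rank

section Swap

open scoped Pointwise

variable {G α : Type*} [Group G] [MulAction G α]

lemma orbit_subset_orbit_of_le {K L : Subgroup G} (hKL : K ≤ L) (a : α) :
    orbit K a ⊆ orbit L a := by
  rintro _ ⟨k, rfl⟩
  exact ⟨⟨k, hKL k.2⟩, rfl⟩

lemma disjoint_orbit_of_notMem {K : Subgroup G} {a b : α} (h : b ∉ orbit K a) :
    Disjoint (orbit K a) (orbit K b) :=
  (orbit.eq_or_disjoint a b).resolve_left fun heq => h (heq ▸ mem_orbit_self b)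

variable {K : Subgroup G} {t : G}

lemma smul_mem_orbit_iff_notMem (hswap : ∀ a : α, orbit K (t • a) = (orbit K a)ᶜ) {a b : α} :
    t • b ∈ orbit K a ↔ b ∉ orbit K a := by
  rw [mem_orbit_symm, hswap, Set.mem_compl_iff, mem_orbit_symm]

lemma smul_orbit_eq_or_eq_compl (hgen : closure (insert t (K : Set G)) = ⊤)
    (hswap : ∀ a : α, orbit K (t • a) = (orbit K a)ᶜ) (a : α) (g : G) :
    g • orbit K a = orbit K a ∨ g • orbit K a = (orbit K a)ᶜ := by
  have hK (k : G) (hk : k ∈ K) : k • orbit K a = orbit K a := smul_orbit (⟨k, hk⟩ : K) a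
  have ht : t • orbit K a = (orbit K a)ᶜ := by
    ext b
    have hb := smul_mem_orbit_iff_notMem hswap (a := a) (b := t⁻¹ • b)
    rw [smul_inv_smul] at hb
    rw [Set.mem_smul_set_iff_inv_smul_mem, Set.mem_compl_iff, hb, not_not]
  have hg : g ∈ closure (insert t (K : Set G)) := hgen ▸ mem_top g
  induction hg using closure_induction with
  | mem u hu =>
    rcases hu with rfl | hu
    · exact .inr ht
    · exact .inl (hK u hu)
  | one => exact .inl (one_smul G _)
  | mul u v _ _ hu hv =>
    rcases hu with hu | hu <;> rcases hv with hv | hv <;>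
      simp [mul_smul, hu, hv, Set.smul_set_compl]
  | inv u _ hu =>
    rcases hu with hu | hu
    · exact .inl (inv_smul_eq_iff.2 hu.symm)
    · exact .inr (inv_smul_eq_iff.2 (by rw [Set.smul_set_compl, hu, compl_compl]))

lemma mem_stabilizer_orbit_iff (hgen : closure (insert t (K : Set G)) = ⊤)
    (hswap : ∀ a : α, orbit K (t • a) = (orbit K a)ᶜ) {a : α} {g : G} :
    g ∈ stabilizer G (orbit K a) ↔ g • a ∈ orbit K a := by
  have hga : g • a ∈ g • orbit K a := Set.smul_mem_smul_set (mem_orbit_self a)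
  refine ⟨fun hg => mem_stabilizer_iff.1 hg ▸ hga, fun h => ?_⟩
  exact (smul_orbit_eq_or_eq_compl hgen hswap a g).resolve_right fun hc => (hc ▸ hga) h

lemma index_stabilizer_orbit_eq_two (hgen : closure (insert t (K : Set G)) = ⊤)
    (hswap : ∀ a : α, orbit K (t • a) = (orbit K a)ᶜ) (a : α) :
    (stabilizer G (orbit K a)).index = 2 := by
  refine index_eq_two_iff'.2 ⟨t, fun g => ?_⟩
  rw [mem_stabilizer_orbit_iff hgen hswap, mem_stabilizer_orbit_iff hgen hswap, mul_smul,
    smul_mem_orbit_iff_notMem hswap]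
  exact xor_not_left.2 Iff.rfl

end Swap

section OrbitIndependent

open scoped Pointwise

variable {G α ι : Type*} [Group G] [MulAction G α] {x : ι → G}

/-- A family `x` in a group acting on `α` is *orbit-independent* if no `x i` moves a point within
its orbit under the subgroup generated by the remaining members. As for linear independence, the
condition is imposed for one index at a time. -/
def OrbitIndependent (α : Type*) [MulAction G α] (x : ι → G) : Prop :=
  ∀ (i : ι) (a : α), x i • a ∉ orbit (closure (x '' {i}ᶜ)) a

namespace OrbitIndependent

lemma two_pow_card_le_ncard_orbit [Finite α] (hx : OrbitIndependent α x) (T : Finset ι) (a : α) :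
    2 ^ T.card ≤ (orbit (closure (x '' T)) a).ncard := by
  classical
  induction T using Finset.induction_on generalizing a with
  | empty =>
    rw [Finset.card_empty, pow_zero]
    exact (Set.ncard_pos (Set.toFinite _)).2 (nonempty_orbit a)
  | insert i T hi ih =>
    have hT : closure (x '' T) ≤ closure (x '' {i}ᶜ) :=
      closure_mono (Set.image_mono fun j hj hji => hi (hji ▸ hj))
    have hle : closure (x '' T) ≤ closure (x '' (insert i T : Finset ι)) :=
      closure_mono (Set.image_mono (by simp))
    have hxi : x i ∈ closure (x '' (insert i T : Finset ι)) :=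
      subset_closure ⟨i, by simp, rfl⟩
    have hdisj := disjoint_orbit_of_notMem fun h => hx i a (orbit_subset_orbit_of_le hT a h)
    calc 2 ^ (insert i T).card
        = 2 ^ T.card + 2 ^ T.card := by rw [Finset.card_insert_of_notMem hi, pow_succ, mul_two]
      _ ≤ (orbit (closure (x '' T)) a).ncard + (orbit (closure (x '' T)) (x i • a)).ncard :=
          add_le_add (ih a) (ih (x i • a))
      _ = (orbit (closure (x '' T)) a ∪ orbit (closure (x '' T)) (x i • a)).ncard :=
          (Set.ncard_union_eq hdisj).symm
      _ ≤ (orbit (closure (x '' (insert i T : Finset ι))) a).ncard := by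
          refine Set.ncard_le_ncard (Set.union_subset (orbit_subset_orbit_of_le hle a) ?_)
          exact (orbit_subset_orbit_of_le hle _).trans
            (orbit_smul_subset (⟨x i, hxi⟩ : Subgroup.closure _) a)

variable [Fintype ι]

lemma two_pow_card_le_two_mul_ncard_orbit [Finite α] (hx : OrbitIndependent α x) (i : ι) (a : α) :
    2 ^ Fintype.card ι ≤ 2 * (orbit (closure (x '' {i}ᶜ)) a).ncard := by
  classical
  have horbit := hx.two_pow_card_le_ncard_orbit (Finset.univ.erase i) a
  have hcard := Finset.card_erase_add_one (Finset.mem_univ i)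
  rw [Finset.coe_erase, Finset.coe_univ, ← Set.compl_eq_univ_sdiff] at horbit
  rw [← Finset.card_univ, ← hcard, pow_succ']
  exact Nat.mul_le_mul_left 2 horbit

lemma orbit_smul_eq_compl [Finite α] (hx : OrbitIndependent α x)
    (hα : 2 * Nat.card α < 3 * 2 ^ Fintype.card ι) (i : ι) (a : α) :
    orbit (closure (x '' {i}ᶜ)) (x i • a) = (orbit (closure (x '' {i}ᶜ)) a)ᶜ := by
  set K := closure (x '' {i}ᶜ)
  have hdisj : Disjoint (orbit K a) (orbit K (x i • a)) := disjoint_orbit_of_notMem (hx i a)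
  refine hdisj.symm.subset_compl_right.antisymm fun b hb => ?_
  by_contra hb'
  have hdisj_b : Disjoint (orbit K a ∪ orbit K (x i • a)) (orbit K b) :=
    Set.disjoint_union_left.2 ⟨disjoint_orbit_of_notMem hb, disjoint_orbit_of_notMem hb'⟩
  have hle := Set.ncard_le_card ((orbit K a ∪ orbit K (x i • a)) ∪ orbit K b)
  rw [Set.ncard_union_eq hdisj_b, Set.ncard_union_eq hdisj] at hle
  have hlarge (c : α) : 2 ^ Fintype.card ι ≤ 2 * (orbit K c).ncard :=
    hx.two_pow_card_le_two_mul_ncard_orbit i c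
  linarith [hlarge a, hlarge (x i • a), hlarge b]

variable [Finite α] (hx : OrbitIndependent α x) (hgen : closure (Set.range x) = ⊤)
  (hα : 2 * Nat.card α < 3 * 2 ^ Fintype.card ι)
include hx hgen hα

lemma mem_stabilizer_orbit_closure_iff (i : ι) {a : α} {g : G} :
    g ∈ stabilizer G (orbit (closure (x '' {i}ᶜ)) a) ↔ g • a ∈ orbit (closure (x '' {i}ᶜ)) a :=
  mem_stabilizer_orbit_iff (closure_insert_closure_eq_top hgen i)
    (hx.orbit_smul_eq_compl hα i)

lemma exists_surjective_hom_ker_eq_iInf_stabilizer_orbit (a : α) :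
    ∃ φ : G →* Multiplicative (ι → ZMod 2), Function.Surjective φ ∧
      φ.ker = ⨅ i, stabilizer G (orbit (closure (x '' {i}ᶜ)) a) := by
  refine exists_surjective_hom_ker_eq_iInf_of_index_eq_two (x := x) (fun i => ?_) fun i j => ?_
  · exact index_stabilizer_orbit_eq_two (closure_insert_closure_eq_top hgen i)
      (hx.orbit_smul_eq_compl hα i) a
  · rw [hx.mem_stabilizer_orbit_closure_iff hgen hα]
    refine ⟨fun h hij => hx i a (hij ▸ h), fun hij => ?_⟩
    exact ⟨⟨x j, subset_closure ⟨j, hij.symm, rfl⟩⟩, rfl⟩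

variable [IsPretransitive G α] (a : α)

lemma stabilizer_eq_iInf_stabilizer_orbit :
    stabilizer G a = ⨅ i, stabilizer G (orbit (closure (x '' {i}ᶜ)) a) := by
  obtain ⟨φ, hφ, hker⟩ := hx.exists_surjective_hom_ker_eq_iInf_stabilizer_orbit hgen hα a
  have hindex : (⨅ i, stabilizer G (orbit (closure (x '' {i}ᶜ)) a)).index =
      2 ^ Fintype.card ι := by
    rw [← hker, index_ker, MonoidHom.range_eq_top.2 hφ, card_top, card_multiplicative_pi_zmod]
  have : Nonempty α := ⟨a⟩
  refine eq_of_le_of_index_lt_two_mul_index (le_iInf fun i g hg => ?_) ?_ ?_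
  · rw [hx.mem_stabilizer_orbit_closure_iff hgen hα, mem_stabilizer_iff.1 hg]
    exact mem_orbit_self a
  · rw [index_stabilizer_of_transitive]
    exact Nat.card_pos.ne'
  · rw [index_stabilizer_of_transitive, hindex]
    omega

lemma exists_surjective_hom_ker_eq_stabilizer :
    ∃ φ : G →* Multiplicative (ι → ZMod 2), Function.Surjective φ ∧ φ.ker = stabilizer G a := by
  rw [hx.stabilizer_eq_iInf_stabilizer_orbit hgen hα a]
  exact hx.exists_surjective_hom_ker_eq_iInf_stabilizer_orbit hgen hα a

lemma exists_smul_mem_orbit_smul {g : G} (hg : g ∉ stabilizer G a) :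
    ∃ i, g • a ∈ orbit (closure (x '' {i}ᶜ)) (x i • a) := by
  simp only [hx.stabilizer_eq_iInf_stabilizer_orbit hgen hα a, mem_iInf, not_forall,
    hx.mem_stabilizer_orbit_closure_iff hgen hα] at hg
  obtain ⟨i, hi⟩ := hg
  exact ⟨i, by rwa [hx.orbit_smul_eq_compl hα]⟩

end OrbitIndependent

end OrbitIndependent

lemma orbitIndependent_quotient_of_forall_not_isPrimitive {G ι : Type*} [Group G] [Group.FG G]
    [Fintype ι] (hι : Fintype.card ι ≤ Group.rank G) {x : ι → G}
    (hx : closure (Set.range x) = ⊤) {H : Subgroup G} (hH : ∀ g ∈ H, ¬ IsPrimitive G g) :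
    OrbitIndependent (G ⧸ H) x := by
  rintro i q ⟨⟨w, hw⟩, hwq : w • q = x i • q⟩
  obtain ⟨a, rfl⟩ := QuotientGroup.mk_surjective q
  have hprim := (isPrimitive_mul_apply hι hx (inv_mem hw)).map_mulEquiv (MulAut.conj a⁻¹)
  refine hH _ ?_ hprim
  rw [Quotient.smul_mk, Quotient.smul_mk, QuotientGroup.eq] at hwq
  simpa [mul_assoc] using hwq

lemma two_mul_lt_three_mul_two_pow {k n : ℕ} (hk : k < n + 2 ^ n) : 2 * k < 3 * 2 ^ n := by
  cases n with
  | zero => omega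
  | succ m =>
    have := m.lt_two_pow_self
    rw [pow_succ] at hk ⊢
    omega

theorem stmt_16_general {G : Type*} [Group G] [Group.FG G] (n : ℕ) (hrank : Group.rank G = n)
    (H : Subgroup G) (hfin : H.index ≠ 0) (hidx : 2 * H.index < 3 * 2 ^ n) :
    ((∀ g ∈ H, ¬ IsPrimitive G g) ↔
      (H.Normal ∧ ∃ φ : G →* Multiplicative (Fin n → ZMod 2),
        Function.Surjective φ ∧ φ.ker = H)) ∧
    ((∀ g ∈ H, ¬ IsPrimitive G g) →
      ∀ g : G, g ∉ H → ∃ x : G, g⁻¹ * x ∈ H ∧ IsPrimitive G x) := by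
  obtain ⟨x, hx⟩ := exists_fin_closure_range_eq_top hrank
  have hn : Fintype.card (Fin n) = Group.rank G := by rw [Fintype.card_fin, hrank]
  have : Finite (G ⧸ H) := Nat.finite_of_card_ne_zero hfin
  have hcard : 2 * Nat.card (G ⧸ H) < 3 * 2 ^ Fintype.card (Fin n) := by
    rwa [Fintype.card_fin]
  have hindep (hH : ∀ g ∈ H, ¬ IsPrimitive G g) : OrbitIndependent (G ⧸ H) x :=
    orbitIndependent_quotient_of_forall_not_isPrimitive hn.le hx hH
  refine ⟨⟨fun hH => ?_, ?_⟩, fun hH g hg => ?_⟩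
  · obtain ⟨φ, hφ, hker⟩ :=
      (hindep hH).exists_surjective_hom_ker_eq_stabilizer hx hcard ((1 : G) : G ⧸ H)
    rw [stabilizer_quotient] at hker
    exact ⟨hker ▸ φ.normal_ker, φ, hφ, hker⟩
  · rintro ⟨-, φ, hφ, rfl⟩ g
    exact not_isPrimitive_of_mem_ker
      (hn ▸ card_le_rank_multiplicative_pi_zmod (Fin n) one_lt_two) hφ
  · rw [← stabilizer_quotient H] at hg
    obtain ⟨i, ⟨w, hw⟩, hwg : w • x i • ((1 : G) : G ⧸ H) = g • ((1 : G) : G ⧸ H)⟩ :=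
      (hindep hH).exists_smul_mem_orbit_smul hx hcard _ hg
    refine ⟨w * x i, ?_, isPrimitive_mul_apply hn.le hx hw⟩
    rw [← mul_smul, Quotient.smul_mk, Quotient.smul_mk, eq_comm, QuotientGroup.eq] at hwg
    simpa using hwg

/-- If `d(G) = n` and `H` is a subgroup of finite index with `[G:H] < n + 2^n`, then `H`
contains no primitive element of `G` if and only if `H` is normal in `G` with
`G ⧸ H ≅ C₂^n` (expressed via a surjective homomorphism onto `C₂^n` with kernel `H`);
moreover, in that case every left coset of `H` other than `H` itself contains a primitive
element of `G`. -/
theorem stmt_16 {G : Type*} [Group G] [Group.FG G] (n : ℕ) (hrank : Group.rank G = n)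
    (H : Subgroup G) (hfin : H.index ≠ 0) (hidx : H.index < n + 2 ^ n) :
    ((∀ g ∈ H, ¬ IsPrimitive G g) ↔
      (H.Normal ∧ ∃ φ : G →* Multiplicative (Fin n → ZMod 2),
        Function.Surjective φ ∧ φ.ker = H)) ∧
    ((∀ g ∈ H, ¬ IsPrimitive G g) →
      ∀ g : G, g ∉ H → ∃ x : G, g⁻¹ * x ∈ H ∧ IsPrimitive G x) :=
  stmt_16_general n hrank H hfin (two_mul_lt_three_mul_two_pow hidx)
end
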